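/- Let k ≥ 1 be a fixed integer. Suppose p_s = o(1), K_n ≥ 2 for all sufficiently large n, and p_e = (ln n + (k−1)·ln ln n + α_n)/n with lim_{n→∞} α_n = −∞. Then for any two distinct nodes v_x, v_y of 𝔾_on(n,K_n,P_n,p_n): (a) if there exists ε > 0 with n·p_e > ε for all sufficiently large n, then for any fixed nonnegative integer ℓ, P[D_{x,ℓ} ∩ D_{y,ℓ} ∩ (E_{xy})^c] ∼ (ℓ!)^{−2}·(p_e·n)^{2ℓ}·e^{−2·p_e·n}; (b) P[D_{x,0} ∩ D_{y,0} ∩ (E_{xy})^c] ∼ e^{−2·p_e·n}. -/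

import Mathlib

open MeasureTheory Filter Asymptotics
open scoped ENNReal

noncomputable section

/-- Key rings: `K`-element subsets of a key pool of size `P`. -/
abbrev KeyRing (P K : ℕ) : Type := {s : Finset (Fin P) // s.card = K}

instance (P K : ℕ) : MeasurableSpace (KeyRing P K) := ⊤

/-- The uniform probability measure on key rings. -/
def uniformKeyMeasure (P K : ℕ) : Measure (KeyRing P K) :=
  (Fintype.card (KeyRing P K) : ℝ≥0∞)⁻¹ • (Measure.count : Measure (KeyRing P K))

/-- The Bernoulli measure with parameter `p` on `Bool`. -/
def bern (p : ℝ) : Measure Bool :=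
  ENNReal.ofReal p • Measure.dirac true + ENNReal.ofReal (1 - p) • Measure.dirac false

/-- Sample space underlying `𝔾_on(n, K, P, p)`: independent key rings for the `n`
nodes together with independent on/off channel states for each pair of nodes. -/
abbrev GonSpace (n K P : ℕ) : Type :=
  (Fin n → KeyRing P K) × (Sym2 (Fin n) → Bool)

/-- The probability measure of the model `𝔾_on(n, K, P, p)`: the key rings of the
`n` nodes are independent and uniform, and the channels are independent
Bernoulli(`p`) variables, independent of the key rings. -/
def gonMeasure (n K P : ℕ) (p : ℝ) : Measure (GonSpace n K P) :=
  (Measure.pi fun _ : Fin n => uniformKeyMeasure P K).prod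
    (Measure.pi fun _ : Sym2 (Fin n) => bern p)

/-- The random graph `𝔾_on`: an edge is present iff the key rings intersect and the
channel between the two nodes is on. -/
def gonGraph {n K P : ℕ} (ω : GonSpace n K P) : SimpleGraph (Fin n) where
  Adj i j := i ≠ j ∧ ((ω.1 i).1 ∩ (ω.1 j).1).Nonempty ∧ ω.2 s(i, j) = true
  symm := by
    constructor
    rintro i j ⟨h1, h2, h3⟩
    exact ⟨h1.symm, by rwa [Finset.inter_comm], by rwa [Sym2.eq_swap]⟩
  loopless := ⟨fun i h => h.1 rfl⟩

/-- The random key graph `G(n, K, P)`: an edge is present iff the key rings intersect. -/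
def rkgGraph {n K P : ℕ} (ω : Fin n → KeyRing P K) : SimpleGraph (Fin n) where
  Adj i j := i ≠ j ∧ ((ω i).1 ∩ (ω j).1).Nonempty
  symm := by
    constructor
    rintro i j ⟨h1, h2⟩
    exact ⟨h1.symm, by rwa [Finset.inter_comm]⟩
  loopless := ⟨fun i h => h.1 rfl⟩

/-- The probability measure of the random key graph model. -/
def rkgMeasure (n K P : ℕ) : Measure (Fin n → KeyRing P K) :=
  Measure.pi fun _ : Fin n => uniformKeyMeasure P K

/-- Degree of a vertex. -/
def gDeg {V : Type*} (G : SimpleGraph V) (v : V) : ℕ := Nat.card {w // G.Adj v w}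

/-- Minimum vertex degree. -/
def minDeg {V : Type*} (G : SimpleGraph V) : ℕ := sInf (Set.range (gDeg G))

/-- A graph is `k`-connected if it remains connected after the removal of any
`k - 1` of its vertices. -/
def KConnected {V : Type*} (G : SimpleGraph V) (k : ℕ) : Prop :=
  ∀ S : Finset V, S.card ≤ k - 1 → (G.induce ((S : Set V)ᶜ)).Connected

/-- Vertex connectivity: the least number of vertices whose deletion disconnects
the graph. -/
def vertexConn {V : Type*} (G : SimpleGraph V) : ℕ :=
  sInf {m | ∃ S : Finset V, S.card = m ∧ ¬ (G.induce ((S : Set V)ᶜ)).Connected}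

/-- `p_s`: the probability that two key rings share at least one key. -/
def psf (K P : ℕ) : ℝ :=
  if 2 * K ≤ P then 1 - (Nat.choose (P - K) K : ℝ) / (Nat.choose P K : ℝ) else 1

/-- `p_e = p · p_s`: the probability of an edge in `𝔾_on`. -/
def pef (K P : ℕ) (p : ℝ) : ℝ := p * psf K P

/-- The event `D_{x,ℓ}` that the node with index `x` has degree exactly `ℓ`. -/
def degEvent (n K P : ℕ) (x ℓ : ℕ) : Set (GonSpace n K P) :=
  {ω | ∃ hx : x < n, gDeg (gonGraph ω) ⟨x, hx⟩ = ℓ}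

/-- The event `E_{xy}` that the edge between the nodes with indices `x`, `y` is present. -/
def edgeEvent (n K P : ℕ) (x y : ℕ) : Set (GonSpace n K P) :=
  {ω | ∃ (hx : x < n) (hy : y < n), (gonGraph ω).Adj ⟨x, hx⟩ ⟨y, hy⟩}

/-- The event that the key rings of nodes `x` and `y` share exactly `u` keys. -/
def interCardEvent (n K P : ℕ) (x y u : ℕ) : Set (GonSpace n K P) :=
  {ω | ∃ (hx : x < n) (hy : y < n), ((ω.1 ⟨x, hx⟩).1 ∩ (ω.1 ⟨y, hy⟩).1).card = u}

/-- The event `K_{xy}` that the key rings of nodes `x` and `y` share at least one key. -/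
def keyShareEvent (n K P : ℕ) (x y : ℕ) : Set (GonSpace n K P) :=
  {ω | ∃ (hx : x < n) (hy : y < n), ((ω.1 ⟨x, hx⟩).1 ∩ (ω.1 ⟨y, hy⟩).1).Nonempty}

/-- `r_n = min(⌊P/K⌋, ⌊n/2⌋)`. -/
def rn (n K P : ℕ) : ℕ := min (P / K) (n / 2)

/-- The threshold array `J`. -/
def Jarr (n K P : ℕ) (ε lam mu : ℝ) (i : ℕ) : ℕ :=
  if i ≤ rn n K P then max ⌊(1 + ε) * (K : ℝ)⌋₊ ⌊lam * (K : ℝ) * (i : ℝ)⌋₊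
  else ⌊mu * (P : ℝ)⌋₊

/-- The event `𝓔(J)`: some set `T` of at least two nodes has a union of key rings of
size at most `J_{|T|}`. -/
def EJ (n K P : ℕ) (ε lam mu : ℝ) : Set (GonSpace n K P) :=
  {ω | ∃ T : Finset (Fin n), 2 ≤ T.card ∧
    (T.biUnion fun i => (ω.1 i).1).card ≤ Jarr n K P ε lam mu T.card}

/-- The weight of a channel state under the Bernoulli law. -/
def chanWeight (p : ℝ) (b : Bool) : ℝ := if b then p else 1 - p

/-- The probability that an edge whose key condition is `h` has status `m`. -/
def statusProb (p : ℝ) (h m : Prop) [Decidable h] [Decidable m] : ℝ :=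
  if m then (if h then p else 0) else 1 - (if h then p else 0)

/-- The vertices other than `x` and `y`. -/
abbrev Others {V : Type*} (x y : V) : Type _ := {z : V // z ≠ x ∧ z ≠ y}

/-- Integrating independent coordinates: a function of finitely many distinct coordinates that
factorizes has a factorizing expectation. -/
lemma sum_prod_weight_mul_prod_injective {E J β : Type*} [Fintype E] [DecidableEq E] [Fintype J]
    [Fintype β] (w : β → ℝ) (hw : ∑ b, w b = 1) (i : J → E) (hi : Function.Injective i)
    (φ : J → β → ℝ) :
    ∑ c : E → β, (∏ e, w (c e)) * ∏ j, φ j (c (i j)) = ∏ j, ∑ b, w b * φ j b := by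
  classical
  set Φ : E → β → ℝ := Function.extend i φ (fun _ _ => 1) with hΦ
  have hΦi : ∀ j, Φ (i j) = φ j := fun j => hi.extend_apply _ _ _
  have hΦo : ∀ e, e ∉ Set.range i → Φ e = fun _ => 1 := fun e he => by
    rw [hΦ, Function.extend_apply' _ _ _ (by simpa using he)]
  have h1 : ∀ c : E → β, ∏ j, φ j (c (i j)) = ∏ e, Φ e (c e) := fun c =>
    Fintype.prod_of_injective i hi _ _ (fun e he => by simp [hΦo e he]) (fun j => by rw [hΦi])
  have h2 : ∏ j, ∑ b, w b * φ j b = ∏ e, ∑ b, w b * Φ e b :=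
    Fintype.prod_of_injective i hi _ _ (fun e he => by simp [hΦo e he, hw])
      (fun j => by rw [hΦi])
  rw [h2, Finset.prod_univ_sum, Fintype.piFinset_univ]
  refine Finset.sum_congr rfl fun c _ => ?_
  rw [h1, Finset.prod_mul_distrib]

/-- The pairs of vertices meeting `{x, y}`. -/
def pairOf {V : Type*} (x y : V) : Option (Others x y × Bool) → Sym2 V
  | none => s(x, y)
  | some (z, true) => s(x, z)
  | some (z, false) => s(y, z)

lemma pairOf_injective {V : Type*} {x y : V} (hxy : x ≠ y) :
    Function.Injective (pairOf x y) := by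
  rintro (_ | ⟨⟨z, hz⟩, (_ | _)⟩) (_ | ⟨⟨w, hw⟩, (_ | _)⟩) h <;>
    simp only [pairOf, Sym2.eq_iff] at h <;> grind

lemma sum_channels {V : Type*} [Fintype V] [DecidableEq V] {x y : V} (hxy : x ≠ y) (p : ℝ)
    (a b : Others x y → Prop) (d : Prop) [DecidablePred a] [DecidablePred b] [Decidable d]
    (Nx Ny : Finset (Others x y)) :
    ∑ c : Sym2 V → Bool, (∏ e, chanWeight p (c e)) *
      (if (∀ z, (a z ∧ c s(x, z) = true ↔ z ∈ Nx) ∧ (b z ∧ c s(y, z) = true ↔ z ∈ Ny)) ∧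
        ¬ (d ∧ c s(x, y) = true) then 1 else 0) =
    (1 - if d then p else 0) *
      ∏ z, statusProb p (a z) (z ∈ Nx) * statusProb p (b z) (z ∈ Ny) := by
  have hw : ∑ β, chanWeight p β = 1 := by simp [chanWeight]
  set φ : Option (Others x y × Bool) → Bool → ℝ := fun j β => match j with
    | none => if d ∧ β = true then 0 else 1
    | some (z, true) => if (a z ∧ β = true ↔ z ∈ Nx) then 1 else 0
    | some (z, false) => if (b z ∧ β = true ↔ z ∈ Ny) then 1 else 0 with hφ
  have key := sum_prod_weight_mul_prod_injective (chanWeight p) hw (pairOf x y)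
    (pairOf_injective hxy) φ
  have hst : ∀ h m : Prop, ∀ [Decidable h] [Decidable m],
      ∑ β, chanWeight p β * (if (h ∧ β = true ↔ m) then (1 : ℝ) else 0) = statusProb p h m := by
    intro h m _ _
    by_cases h1 : h <;> by_cases h2 : m <;> simp [h1, h2, chanWeight, statusProb]
  have hn : ∑ β, chanWeight p β * (if d ∧ β = true then (0 : ℝ) else 1)
      = 1 - if d then p else 0 := by
    by_cases h1 : d <;> simp [h1, chanWeight]
  have hrhs : ∏ j, ∑ β, chanWeight p β * φ j β = (1 - if d then p else 0) *
      ∏ z, statusProb p (a z) (z ∈ Nx) * statusProb p (b z) (z ∈ Ny) := by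
    rw [Fintype.prod_option, Fintype.prod_prod_type]
    simp only [Fintype.prod_bool, hφ, hst, hn]
  rw [← hrhs, ← key]
  refine Finset.sum_congr rfl fun c _ => ?_
  congr 1
  have hφc : ∏ j, φ j (c (pairOf x y j)) = (if d ∧ c s(x, y) = true then (0 : ℝ) else 1) *
      ∏ z : Others x y, (if (a z ∧ c s(x, z) = true ↔ z ∈ Nx) then (1 : ℝ) else 0) *
        (if (b z ∧ c s(y, z) = true ↔ z ∈ Ny) then 1 else 0) := by
    rw [Fintype.prod_option, Fintype.prod_prod_type]
    simp only [Fintype.prod_bool]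
    rfl
  have hmul : ∀ z : Others x y, (if (a z ∧ c s(x, z) = true ↔ z ∈ Nx) then (1 : ℝ) else 0) *
      (if (b z ∧ c s(y, z) = true ↔ z ∈ Ny) then 1 else 0) =
      if ((a z ∧ c s(x, z) = true ↔ z ∈ Nx) ∧ (b z ∧ c s(y, z) = true ↔ z ∈ Ny)) then 1 else 0 := by
    intro z
    rw [ite_and]
    split_ifs <;> simp
  rw [hφc]
  simp only [hmul, Finset.prod_ite_zero]
  by_cases h : d ∧ c s(x, y) = true
  · simp [h]
  · simp [h]

lemma sum_keys {V κ : Type*} [Fintype V] [DecidableEq V] [Fintype κ] [DecidableEq κ] [Nonempty κ]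
    {x y : V} (hxy : x ≠ y) (G : κ → κ → ℝ) (ψ : κ → κ → Others x y → κ → ℝ) :
    ∑ S : V → κ, (∏ _v : V, (Fintype.card κ : ℝ)⁻¹) *
      (G (S x) (S y) * ∏ z, ψ (S x) (S y) z (S z)) =
    ∑ A, ∑ B, ((Fintype.card κ : ℝ)⁻¹) ^ 2 * (G A B *
      ∏ z, ∑ s, (Fintype.card κ : ℝ)⁻¹ * ψ A B z s) := by
  have hc : (Fintype.card κ : ℝ) ≠ 0 := by simp
  have hw : ∑ _b : κ, (Fintype.card κ : ℝ)⁻¹ = 1 := by simp [hc]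
  let i : Option (Option (Others x y)) → V := fun j => match j with
    | none => x
    | some none => y
    | some (some z) => z
  have hi : Function.Injective i := by
    rintro (_ | _ | ⟨z, hz⟩) (_ | _ | ⟨w, hw⟩) h <;> simp only [i] at h <;> grind
  have key : ∀ A B, _ := fun A B =>
    sum_prod_weight_mul_prod_injective (fun _ : κ => (Fintype.card κ : ℝ)⁻¹) hw i hi
    (fun j s => match j with
      | none => if A = s then 1 else 0
      | some none => if B = s then 1 else 0
      | some (some z) => ψ A B z s)
  simp only [Fintype.prod_option, i] at key
  simp only [mul_ite, mul_one, mul_zero, Finset.sum_ite_eq, Finset.mem_univ, if_true] at key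
  have : ∀ A B, (Fintype.card κ : ℝ)⁻¹ ^ 2 * (G A B * ∏ z, ∑ s, (Fintype.card κ : ℝ)⁻¹ * ψ A B z s)
      = G A B * ((Fintype.card κ : ℝ)⁻¹ * ((Fintype.card κ : ℝ)⁻¹ *
        ∏ z, ∑ s, (Fintype.card κ : ℝ)⁻¹ * ψ A B z s)) := fun A B => by ring
  simp only [this, ← key, Finset.mul_sum]
  conv_rhs =>
    enter [2, A]
    rw [Finset.sum_comm]
  rw [Finset.sum_comm]
  refine Finset.sum_congr rfl fun S _ => ?_
  rw [Finset.sum_eq_single (S x), Finset.sum_eq_single (S y)]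
  · simp; ring
  · intro B _ hB; simp [hB]
  · simp
  · intro A _ hA; simp [hA]
  · simp

instance (P K : ℕ) : MeasurableSingletonClass (KeyRing P K) := ⟨fun _ => trivial⟩

lemma card_keyRing (P K : ℕ) : Fintype.card (KeyRing P K) = P.choose K := by
  rw [Fintype.card_finset_len, Fintype.card_fin]

lemma keyRing_nonempty {P K : ℕ} (h : K ≤ P) : Nonempty (KeyRing P K) := by
  rw [← Fintype.card_pos_iff, card_keyRing]
  exact Nat.choose_pos h

lemma uniformKeyMeasure_isProbability {P K : ℕ} (h : K ≤ P) :
    IsProbabilityMeasure (uniformKeyMeasure P K) := by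
  have := keyRing_nonempty h
  constructor
  rw [uniformKeyMeasure, Measure.smul_apply, Measure.count_univ, smul_eq_mul]
  rw [ENat.card_eq_coe_fintype_card]
  exact ENNReal.inv_mul_cancel (by exact_mod_cast Fintype.card_ne_zero) (by simp)

lemma bern_isProbability {p : ℝ} (h0 : 0 ≤ p) (h1 : p ≤ 1) : IsProbabilityMeasure (bern p) := by
  constructor
  simp only [bern, Measure.add_apply, Measure.smul_apply, measure_univ, smul_eq_mul, mul_one]
  rw [← ENNReal.ofReal_add h0 (by linarith)]
  simp

lemma gonMeasure_toReal_eq_sum {n K P : ℕ} {p : ℝ} (h0 : 0 ≤ p) (h1 : p ≤ 1) (hKP : K ≤ P)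
    (E : Set (GonSpace n K P)) [DecidablePred (· ∈ E)] :
    (gonMeasure n K P p E).toReal =
      ∑ S : Fin n → KeyRing P K, ∑ c : Sym2 (Fin n) → Bool,
        (∏ _v : Fin n, (Fintype.card (KeyRing P K) : ℝ)⁻¹) *
          ((∏ e, chanWeight p (c e)) * if (S, c) ∈ E then 1 else 0) := by
  have := uniformKeyMeasure_isProbability hKP
  have := bern_isProbability h0 h1
  have hfin : IsFiniteMeasure (gonMeasure n K P p) := by unfold gonMeasure; infer_instance
  have hE : E = ((Finset.univ.filter (· ∈ E) : Finset (GonSpace n K P)) : Set _) := by simp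
  have hs : ∀ S c, (gonMeasure n K P p).real {(S, c)} =
      (∏ _v : Fin n, (Fintype.card (KeyRing P K) : ℝ)⁻¹) * ∏ e, chanWeight p (c e) := by
    intro S c
    rw [gonMeasure, ← Set.singleton_prod_singleton, measureReal_def, Measure.prod_prod,
      Measure.pi_singleton, Measure.pi_singleton, ENNReal.toReal_mul, ENNReal.toReal_prod,
      ENNReal.toReal_prod]
    congr 1
    · simp [uniformKeyMeasure]
    · refine Finset.prod_congr rfl fun e _ => ?_
      cases hc : c e <;> simp [bern, chanWeight, h0, h1]
  change (gonMeasure n K P p).real E = _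
  conv_lhs => rw [hE]
  rw [← sum_measureReal_singleton, Finset.sum_filter, Fintype.sum_prod_type]
  refine Finset.sum_congr rfl fun S _ => Finset.sum_congr rfl fun c _ => ?_
  rw [hs]
  split_ifs <;> simp

/-- Two key rings share a key. -/
abbrev Hits {P K : ℕ} (A B : KeyRing P K) : Prop := (A.1 ∩ B.1).Nonempty

open Classical in
lemma gDeg_eq_card_others {V : Type*} [Fintype V] (G : SimpleGraph V) {x y : V}
    (h : ¬ G.Adj x y) :
    gDeg G x = (Finset.univ.filter fun z : Others x y => G.Adj x z).card := by
  rw [gDeg, Nat.card_eq_fintype_card, Fintype.card_subtype]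
  symm
  refine Finset.card_bij (fun z _ => z.1) (by simp) (by simp [Subtype.ext_iff]) ?_
  intro b hb
  simp only [Finset.mem_filter, Finset.mem_univ, true_and] at hb
  refine ⟨⟨b, hb.ne', ?_⟩, by simpa using hb, rfl⟩
  rintro rfl
  exact h hb

open Classical in
lemma gDeg_eq_card_others_right {V : Type*} [Fintype V] (G : SimpleGraph V) {x y : V}
    (h : ¬ G.Adj x y) :
    gDeg G y = (Finset.univ.filter fun z : Others x y => G.Adj y z).card := by
  rw [gDeg, Nat.card_eq_fintype_card, Fintype.card_subtype]
  symm
  refine Finset.card_bij (fun z _ => z.1) (by simp) (by simp [Subtype.ext_iff]) ?_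
  intro b hb
  simp only [Finset.mem_filter, Finset.mem_univ, true_and] at hb
  refine ⟨⟨b, ?_, hb.ne'⟩, by simpa using hb, rfl⟩
  rintro rfl
  exact h hb.symm

lemma sum_powersetCard_ite {W : Type*} [Fintype W] [DecidableEq W] (X Y : Finset W) (ℓ : ℕ) :
    ∑ Nx ∈ Finset.powersetCard ℓ (Finset.univ : Finset W),
      ∑ Ny ∈ Finset.powersetCard ℓ (Finset.univ : Finset W),
        (if X = Nx ∧ Y = Ny then (1 : ℝ) else 0) = if X.card = ℓ ∧ Y.card = ℓ then 1 else 0 := by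
  simp only [ite_and, Finset.sum_ite_irrel, Finset.sum_const_zero, Finset.sum_ite_eq,
    Finset.mem_powersetCard_univ]

open Classical in
lemma event_indicator {n K P : ℕ} {x y : Fin n} (hxy : x ≠ y) (ℓ : ℕ) (ω : GonSpace n K P) :
    (if ω ∈ degEvent n K P x ℓ ∩ degEvent n K P y ℓ ∩ (edgeEvent n K P x y)ᶜ then (1 : ℝ) else 0) =
      ∑ Nx ∈ Finset.powersetCard ℓ (Finset.univ : Finset (Others x y)),
        ∑ Ny ∈ Finset.powersetCard ℓ (Finset.univ : Finset (Others x y)),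
          if (∀ z : Others x y, (Hits (ω.1 x) (ω.1 z) ∧ ω.2 s(x, z) = true ↔ z ∈ Nx) ∧
              (Hits (ω.1 y) (ω.1 z) ∧ ω.2 s(y, z) = true ↔ z ∈ Ny)) ∧
            ¬ (Hits (ω.1 x) (ω.1 y) ∧ ω.2 s(x, y) = true) then 1 else 0 := by
  have hedge : ω ∈ edgeEvent n K P x y ↔ (gonGraph ω).Adj x y := by simp [edgeEvent]
  have hdx : ω ∈ degEvent n K P x ℓ ↔ gDeg (gonGraph ω) x = ℓ := by simp [degEvent]
  have hdy : ω ∈ degEvent n K P y ℓ ↔ gDeg (gonGraph ω) y = ℓ := by simp [degEvent]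
  have hadj : (gonGraph ω).Adj x y ↔ (Hits (ω.1 x) (ω.1 y) ∧ ω.2 s(x, y) = true) := by
    simp [gonGraph, hxy]
  simp only [Set.mem_inter_iff, Set.mem_compl_iff, hedge, hdx, hdy]
  by_cases h : (gonGraph ω).Adj x y
  · simp [h, hadj.1 h]
  · have h' := h
    rw [hadj] at h'
    rw [gDeg_eq_card_others _ h, gDeg_eq_card_others_right _ h]
    simp only [h, h', not_false_eq_true, and_true]
    rw [← sum_powersetCard_ite]
    refine Finset.sum_congr rfl fun Nx _ => Finset.sum_congr rfl fun Ny _ => ?_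
    congr 1
    rw [Finset.ext_iff, Finset.ext_iff, ← forall_and, eq_iff_iff]
    refine forall_congr' fun z => ?_
    rw [Finset.mem_filter, Finset.mem_filter]
    simp [gonGraph, z.2.1.symm, z.2.2.symm]

/-- The probability that another node has adjacency status `m₁` to a node with key ring `A` and
`m₂` to a node with key ring `B`. -/
def pairStatusProb {P K : ℕ} (p : ℝ) (A B : KeyRing P K) (m₁ m₂ : Prop) [Decidable m₁]
    [Decidable m₂] : ℝ :=
  ∑ s, (Fintype.card (KeyRing P K) : ℝ)⁻¹ *
    (statusProb p (Hits A s) m₁ * statusProb p (Hits B s) m₂)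

/-- The probability, given key rings `A` and `B` of two nodes, that these nodes have exactly `ℓ`
neighbours each among the nodes of `W`. -/
def condDegProb {P K : ℕ} (p : ℝ) (ℓ : ℕ) (W : Type*) [Fintype W] [DecidableEq W]
    (A B : KeyRing P K) : ℝ :=
  ∑ Nx ∈ Finset.powersetCard ℓ (Finset.univ : Finset W),
    ∑ Ny ∈ Finset.powersetCard ℓ (Finset.univ : Finset W),
      ∏ z : W, pairStatusProb p A B (z ∈ Nx) (z ∈ Ny)

lemma sum_comm_pairs {ι₁ ι₂ ι₃ ι₄ : Type*} (s : Finset ι₁) (t : Finset ι₂) (u : Finset ι₃)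
    (v : Finset ι₄) (f : ι₁ → ι₂ → ι₃ → ι₄ → ℝ) :
    ∑ a ∈ s, ∑ b ∈ t, ∑ c ∈ u, ∑ d ∈ v, f a b c d =
      ∑ c ∈ u, ∑ d ∈ v, ∑ a ∈ s, ∑ b ∈ t, f a b c d := by
  have := Finset.sum_comm (s := s ×ˢ t) (t := u ×ˢ v) (f := fun i j => f i.1 i.2 j.1 j.2)
  simpa only [Finset.sum_product] using this

lemma gonMeasure_event_eq {n K P : ℕ} {p : ℝ} (h0 : 0 ≤ p) (h1 : p ≤ 1) (hKP : K ≤ P)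
    {x y : Fin n} (hxy : x ≠ y) (ℓ : ℕ) :
    (gonMeasure n K P p
      (degEvent n K P x ℓ ∩ degEvent n K P y ℓ ∩ (edgeEvent n K P x y)ᶜ)).toReal =
    ∑ A : KeyRing P K, ∑ B : KeyRing P K, ((Fintype.card (KeyRing P K) : ℝ)⁻¹) ^ 2 *
      ((1 - if Hits A B then p else 0) * condDegProb p ℓ (Others x y) A B) := by
  classical
  have := keyRing_nonempty hKP
  have hk : ∀ (Nx Ny : Finset (Others x y)), _ := fun Nx Ny =>
    sum_keys hxy (fun A B : KeyRing P K => 1 - if Hits A B then p else 0) (fun A B z s =>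
      statusProb p (Hits A s) (z ∈ Nx) * statusProb p (Hits B s) (z ∈ Ny))
  rw [gonMeasure_toReal_eq_sum h0 h1 hKP]
  simp only [event_indicator hxy ℓ, condDegProb, Finset.mul_sum]
  refine (sum_comm_pairs _ _ _ _ _).trans (Eq.trans ?_ (sum_comm_pairs _ _ _ _ _))
  refine Finset.sum_congr rfl fun Nx _ => Finset.sum_congr rfl fun Ny _ => ?_
  simp only [pairStatusProb]
  rw [← hk]
  refine Finset.sum_congr rfl fun S _ => ?_
  rw [← Finset.mul_sum]
  congr 1
  convert sum_channels hxy p (fun z => Hits (S x) (S z)) (fun z => Hits (S y) (S z))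
    (Hits (S x) (S y)) Nx Ny using 3

lemma descFactorial_mul_pow_le {a b : ℕ} (h : a ≤ b) (j : ℕ) :
    a.descFactorial j * b ^ j ≤ b.descFactorial j * a ^ j := by
  induction j with
  | zero => simp
  | succ j ih =>
    have hj : (a - j) * b ≤ (b - j) * a := by
      rcases le_total a j with h' | h'
      · simp [Nat.sub_eq_zero_of_le h']
      · obtain ⟨d, rfl⟩ := Nat.exists_eq_add_of_le h
        obtain ⟨e, rfl⟩ := Nat.exists_eq_add_of_le h'
        rw [show j + e - j = e by omega, show j + e + d - j = e + d by omega]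
        nlinarith [Nat.zero_le (j * d)]
    calc a.descFactorial (j + 1) * b ^ (j + 1)
        = ((a - j) * b) * (a.descFactorial j * b ^ j) := by
          rw [Nat.descFactorial_succ, pow_succ]; ring
      _ ≤ ((b - j) * a) * (b.descFactorial j * a ^ j) := Nat.mul_le_mul hj ih
      _ = _ := by rw [Nat.descFactorial_succ, pow_succ]; ring

lemma choose_mul_pow_le {a b : ℕ} (h : a ≤ b) (j : ℕ) :
    a.choose j * b ^ j ≤ b.choose j * a ^ j := by
  have := descFactorial_mul_pow_le h j
  rw [Nat.descFactorial_eq_factorial_mul_choose, Nat.descFactorial_eq_factorial_mul_choose,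
    mul_assoc, mul_assoc] at this
  exact Nat.le_of_mul_le_mul_left this (Nat.factorial_pos j)

/-- The average of a function over all key rings. -/
def keyAvg {P K : ℕ} (f : KeyRing P K → ℝ) : ℝ := ∑ s, (Fintype.card (KeyRing P K) : ℝ)⁻¹ * f s

section keyAvg

variable {P K : ℕ}

lemma keyAvg_mono {f g : KeyRing P K → ℝ} (h : ∀ s, f s ≤ g s) : keyAvg f ≤ keyAvg g :=
  Finset.sum_le_sum fun s _ => mul_le_mul_of_nonneg_left (h s) (by positivity)

lemma keyAvg_nonneg {f : KeyRing P K → ℝ} (h : ∀ s, 0 ≤ f s) : 0 ≤ keyAvg f :=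
  Finset.sum_nonneg fun s _ => mul_nonneg (by positivity) (h s)

lemma keyAvg_const (h : K ≤ P) (c : ℝ) : keyAvg (fun _ : KeyRing P K => c) = c := by
  have := keyRing_nonempty h
  have hc : (Fintype.card (KeyRing P K) : ℝ) ≠ 0 := by exact_mod_cast Fintype.card_ne_zero
  unfold keyAvg
  rw [Finset.sum_const, nsmul_eq_mul, Finset.card_univ, ← mul_assoc, mul_inv_cancel₀ hc, one_mul]

lemma keyAvg_add (f g : KeyRing P K → ℝ) : keyAvg (fun s => f s + g s) = keyAvg f + keyAvg g := by
  simp [keyAvg, mul_add, Finset.sum_add_distrib]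

lemma keyAvg_sub (f g : KeyRing P K → ℝ) : keyAvg (fun s => f s - g s) = keyAvg f - keyAvg g := by
  simp [keyAvg, mul_sub, Finset.sum_sub_distrib]

lemma keyAvg_mul (c : ℝ) (f : KeyRing P K → ℝ) : keyAvg (fun s => c * f s) = c * keyAvg f := by
  simp only [keyAvg, Finset.mul_sum]
  exact Finset.sum_congr rfl fun _ _ => by ring

lemma keyAvg_sum {ι : Type*} (T : Finset ι) (f : ι → KeyRing P K → ℝ) :
    keyAvg (fun s => ∑ i ∈ T, f i s) = ∑ i ∈ T, keyAvg (f i) := by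
  simp only [keyAvg, Finset.mul_sum]
  exact Finset.sum_comm

lemma card_filter_subset_le (T : Finset (Fin P)) :
    (Finset.univ.filter fun s : KeyRing P K => T ⊆ s.1).card ≤
      (P - T.card).choose (K - T.card) := by
  have : (Finset.powersetCard (K - T.card) Tᶜ).card = (P - T.card).choose (K - T.card) := by
    rw [Finset.card_powersetCard, Finset.card_compl, Fintype.card_fin]
  rw [← this]
  refine Finset.card_le_card_of_injOn (fun s => s.1 \ T) ?_ ?_
  · intro s hs
    simp only [Finset.coe_filter, Finset.mem_univ, true_and, Set.mem_ofPred_eq] at hs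
    simp only [Finset.mem_coe, Finset.mem_powersetCard]
    refine ⟨fun a ha => by simp_all, ?_⟩
    rw [Finset.card_sdiff_of_subset hs, s.2]
  · intro s hs t ht hst
    simp only [Finset.coe_filter, Finset.mem_univ, true_and, Set.mem_ofPred_eq] at hs ht
    apply Subtype.ext
    rw [← Finset.sdiff_union_of_subset hs, ← Finset.sdiff_union_of_subset ht]
    simp only at hst
    rw [hst]

lemma keyAvg_ite (q : KeyRing P K → Prop) [DecidablePred q] :
    keyAvg (fun s => if q s then 1 else 0) = ((Finset.univ.filter q).card : ℝ) / P.choose K := by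
  rw [keyAvg, ← Finset.mul_sum, Finset.sum_boole, card_keyRing, div_eq_inv_mul]

lemma keyAvg_subset_le (h : K ≤ P) (T : Finset (Fin P)) :
    keyAvg (fun s : KeyRing P K => if T ⊆ s.1 then 1 else 0) ≤ ((K : ℝ) / P) ^ T.card := by
  rw [keyAvg_ite]
  rcases lt_or_ge K T.card with hT | hT
  · have : (Finset.univ.filter fun s : KeyRing P K => T ⊆ s.1) = ∅ := by
      ext s
      simp only [Finset.mem_filter, Finset.mem_univ, true_and, Finset.notMem_empty, iff_false]
      intro hs
      have := Finset.card_le_card hs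
      rw [s.2] at this
      omega
    rw [this]
    simp only [Finset.card_empty, Nat.cast_zero, zero_div]
    positivity
  · have hTP : T.card ≤ P := hT.trans h
    have hC : (0 : ℝ) < P.choose K := by exact_mod_cast Nat.choose_pos h
    have hCT : (0 : ℝ) < P.choose T.card := by exact_mod_cast Nat.choose_pos hTP
    rcases Nat.eq_zero_or_pos P with hP | hP
    · have h0 : T.card = 0 := by omega
      rw [h0, pow_zero, div_le_one hC, ← card_keyRing]
      exact_mod_cast Finset.card_le_univ _
    have hP' : (0 : ℝ) < P := by exact_mod_cast hP
    rw [div_pow, div_le_div_iff₀ hC (by positivity)]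
    have h1 : ((Finset.univ.filter fun s : KeyRing P K => T ⊆ s.1).card : ℝ) ≤
        ((P - T.card).choose (K - T.card) : ℕ) := by exact_mod_cast card_filter_subset_le T
    have h2 : (P.choose K : ℝ) * K.choose T.card =
        P.choose T.card * ((P - T.card).choose (K - T.card) : ℕ) := by
      exact_mod_cast Nat.choose_mul hT
    have h3 : (K.choose T.card : ℝ) * P ^ T.card ≤ P.choose T.card * K ^ T.card := by
      exact_mod_cast choose_mul_pow_le h T.card
    refine le_trans (mul_le_mul_of_nonneg_right h1 (by positivity)) ?_
    refine le_of_mul_le_mul_left ?_ hCT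
    rw [← mul_assoc, ← h2]
    nlinarith

lemma psf_eq (h : K ≤ P) : psf K P = 1 - (Nat.choose (P - K) K : ℝ) / (Nat.choose P K : ℝ) := by
  unfold psf
  split_ifs with h'
  · rfl
  · rw [Nat.choose_eq_zero_of_lt (by omega : P - K < K)]
    simp

lemma keyAvg_hits (h : K ≤ P) (A : KeyRing P K) :
    keyAvg (fun s => if Hits A s then 1 else 0) = psf K P := by
  have hcount : (Finset.univ.filter fun s : KeyRing P K => ¬ Hits A s).card =
      (P - K).choose K := by
    have : (Finset.powersetCard K A.1ᶜ).card = (P - K).choose K := by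
      rw [Finset.card_powersetCard, Finset.card_compl, Fintype.card_fin, A.2]
    rw [← this]
    refine Finset.card_bij (fun s _ => s.1) ?_ (fun s _ t _ => Subtype.ext) ?_
    · intro s hs
      simp only [Finset.mem_filter, Finset.mem_univ, true_and, Hits,
        Finset.not_nonempty_iff_eq_empty, ← Finset.disjoint_iff_inter_eq_empty] at hs
      rw [Finset.mem_powersetCard]
      exact ⟨by rw [Finset.subset_compl_iff_disjoint_left]; exact hs, s.2⟩
    · intro s hs
      rw [Finset.mem_powersetCard] at hs
      refine ⟨⟨s, hs.2⟩, ?_, rfl⟩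
      simp only [Finset.mem_filter, Finset.mem_univ, true_and, Hits,
        Finset.not_nonempty_iff_eq_empty, ← Finset.disjoint_iff_inter_eq_empty]
      have := hs.1
      rwa [Finset.subset_compl_iff_disjoint_left] at this
  have hfun : (fun s : KeyRing P K => if Hits A s then (1 : ℝ) else 0) =
      fun s => 1 - if ¬ Hits A s then 1 else 0 := by
    funext s
    split_ifs <;> simp
  rw [hfun, keyAvg_sub, keyAvg_const h, keyAvg_ite, hcount, psf_eq h]

lemma psf_nonneg (h : K ≤ P) : 0 ≤ psf K P := by
  obtain ⟨A⟩ := keyRing_nonempty h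
  rw [← keyAvg_hits h A]
  exact keyAvg_nonneg fun s => by split_ifs <;> simp

lemma psf_le_one (h : K ≤ P) : psf K P ≤ 1 := by
  rw [psf_eq h]
  have : (0 : ℝ) ≤ (Nat.choose (P - K) K : ℝ) / (Nat.choose P K : ℝ) := by positivity
  linarith

lemma sq_div_mul_one_sub_psf_le (h : K ≤ P) (hK : 0 < K) :
    (K : ℝ) ^ 2 / P * (1 - psf K P) ≤ psf K P := by
  have hP : (0 : ℝ) < P := by exact_mod_cast hK.trans_le h
  have hC : (0 : ℝ) < P.choose K := by exact_mod_cast Nat.choose_pos h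
  set lam : ℝ := (K : ℝ) ^ 2 / P with hlam
  have h0 : 0 ≤ lam := by positivity
  have h1 : 1 - psf K P ≤ Real.exp (-lam) := by
    rw [psf_eq h, sub_sub_cancel]
    have h2 : ((P - K).choose K : ℝ) * P ^ K ≤ P.choose K * ((P - K : ℕ) : ℝ) ^ K := by
      exact_mod_cast choose_mul_pow_le (Nat.sub_le P K) K
    rw [Nat.cast_sub h] at h2
    have hKP : (K : ℝ) ≤ P := by exact_mod_cast h
    calc ((P - K).choose K : ℝ) / P.choose K ≤ (((P : ℝ) - K) / P) ^ K := by
          rw [div_pow, div_le_div_iff₀ hC (by positivity)]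
          linarith
      _ ≤ (Real.exp (-(K / P : ℝ))) ^ K := by
          apply pow_le_pow_left₀ (div_nonneg (by linarith) hP.le)
          have := Real.add_one_le_exp (-(K / P : ℝ))
          rw [sub_div, div_self hP.ne']
          linarith
      _ = Real.exp (-lam) := by
          rw [← Real.exp_nat_mul, hlam]
          congr 1
          ring
  have h3 : (1 + lam) * Real.exp (-lam) ≤ 1 := by
    rw [Real.exp_neg, ← div_eq_mul_inv, div_le_one (Real.exp_pos _)]
    linarith [Real.add_one_le_exp lam]
  nlinarith

lemma keyAvg_hits_pow_le (h : K ≤ P) (A : KeyRing P K) {t : ℝ} (ht : 0 ≤ t) :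
    keyAvg (fun B : KeyRing P K => if Hits A B then t ^ (A.1 ∩ B.1).card else 0) ≤
      Real.exp (t * ((K : ℝ) ^ 2 / P)) - 1 := by
  calc keyAvg (fun B : KeyRing P K => if Hits A B then t ^ (A.1 ∩ B.1).card else 0)
      ≤ keyAvg (fun B : KeyRing P K => ∑ T ∈ A.1.powerset.erase ∅,
          t ^ T.card * if T ⊆ B.1 then 1 else 0) := by
        refine keyAvg_mono fun B => ?_
        have hnn : ∀ T ∈ A.1.powerset.erase ∅, (0 : ℝ) ≤ t ^ T.card * if T ⊆ B.1 then 1 else 0 :=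
          fun T _ => by positivity
        split_ifs with hh
        · refine le_trans ?_ (Finset.single_le_sum hnn (a := A.1 ∩ B.1) ?_)
          · simp [Finset.inter_subset_right]
          · simp [Finset.inter_subset_left, ← Finset.nonempty_iff_ne_empty, hh]
        · exact Finset.sum_nonneg hnn
    _ ≤ ∑ T ∈ A.1.powerset.erase ∅, (t * ((K : ℝ) / P)) ^ T.card := by
        rw [keyAvg_sum]
        refine Finset.sum_le_sum fun T _ => ?_
        rw [keyAvg_mul, mul_pow]
        exact mul_le_mul_of_nonneg_left (keyAvg_subset_le h T) (by positivity)
    _ = (t * ((K : ℝ) / P) + 1) ^ K - 1 := by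
        have := Finset.sum_pow_mul_eq_add_pow (t * ((K : ℝ) / P)) 1 A.1
        rw [A.2] at this
        rw [← this, ← Finset.add_sum_erase _ _ (Finset.empty_mem_powerset A.1)]
        simp
    _ ≤ Real.exp (t * ((K : ℝ) ^ 2 / P)) - 1 := by
        have h1 : (t * ((K : ℝ) / P) + 1) ^ K ≤ Real.exp (t * ((K : ℝ) / P)) ^ K :=
          pow_le_pow_left₀ (by positivity) (Real.add_one_le_exp _) K
        rw [← Real.exp_nat_mul] at h1
        have h2 : (K : ℝ) * (t * ((K : ℝ) / P)) = t * ((K : ℝ) ^ 2 / P) := by ring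
        rw [h2] at h1
        linarith

/-- The probability that a random key ring meets both `A` and `B`. -/
def bothHitProb (A B : KeyRing P K) : ℝ :=
  keyAvg (fun s => if Hits A s ∧ Hits B s then 1 else 0)

lemma bothHitProb_nonneg (A B : KeyRing P K) : 0 ≤ bothHitProb A B :=
  keyAvg_nonneg fun s => by split_ifs <;> simp

lemma bothHitProb_le_psf (h : K ≤ P) (A B : KeyRing P K) : bothHitProb A B ≤ psf K P := by
  rw [← keyAvg_hits h A]
  refine keyAvg_mono fun s => ?_
  split_ifs <;> simp_all

lemma bothHitProb_le (h : K ≤ P) (A B : KeyRing P K) :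
    bothHitProb A B ≤ (A.1 ∩ B.1).card * ((K : ℝ) / P) + ((K : ℝ) ^ 2 / P) ^ 2 := by
  calc bothHitProb A B
      ≤ keyAvg (fun s => (∑ a ∈ A.1 ∩ B.1, if {a} ⊆ s.1 then (1 : ℝ) else 0) +
          ∑ ab ∈ (A.1 ×ˢ B.1).filter (fun ab => ab.1 ≠ ab.2),
            if {ab.1, ab.2} ⊆ s.1 then (1 : ℝ) else 0) := by
        refine keyAvg_mono fun s => ?_
        have hn1 : (0 : ℝ) ≤ ∑ a ∈ A.1 ∩ B.1, if {a} ⊆ s.1 then (1 : ℝ) else 0 := by positivity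
        have hn2 : (0 : ℝ) ≤ ∑ ab ∈ (A.1 ×ˢ B.1).filter (fun ab => ab.1 ≠ ab.2),
            if {ab.1, ab.2} ⊆ s.1 then (1 : ℝ) else 0 := by positivity
        split_ifs with hh
        · obtain ⟨⟨a, ha⟩, ⟨b, hb⟩⟩ := hh
          rw [Finset.mem_inter] at ha hb
          by_cases hab : a = b
          · subst hab
            have := Finset.single_le_sum (f := fun a => if {a} ⊆ s.1 then (1 : ℝ) else 0)
              (fun _ _ => by positivity) (Finset.mem_inter.2 ⟨ha.1, hb.1⟩)
            simp only [Finset.singleton_subset_iff, ha.2, if_true] at this hn2 ⊢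
            linarith
          · have := Finset.single_le_sum (s := (A.1 ×ˢ B.1).filter (fun ab => ab.1 ≠ ab.2))
              (f := fun ab => if {ab.1, ab.2} ⊆ s.1 then (1 : ℝ) else 0) (a := (a, b))
              (fun _ _ => by positivity) (by simp [ha.1, hb.1, hab])
            rw [if_pos (by simp [Finset.insert_subset_iff, ha.2, hb.2])] at this
            linarith
        · linarith
    _ ≤ ∑ a ∈ A.1 ∩ B.1, ((K : ℝ) / P) + ∑ ab ∈ A.1 ×ˢ B.1, ((K : ℝ) / P) ^ 2 := by
        rw [keyAvg_add, keyAvg_sum, keyAvg_sum]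
        refine add_le_add (Finset.sum_le_sum fun a _ => ?_) ?_
        · simpa using keyAvg_subset_le h {a}
        · refine le_trans (Finset.sum_le_sum fun ab hab => ?_)
            (Finset.sum_le_sum_of_subset_of_nonneg (Finset.filter_subset _ _)
              fun _ _ _ => by positivity)
          have := keyAvg_subset_le h {ab.1, ab.2}
          rwa [Finset.card_pair (Finset.mem_filter.1 hab).2] at this
    _ = _ := by
        rw [Finset.sum_const, Finset.sum_const, Finset.card_product, A.2, B.2, nsmul_eq_mul,
          nsmul_eq_mul]
        push_cast
        ring

lemma pairStatusProb_eq (h : K ≤ P) (p : ℝ) (A B : KeyRing P K) (m₁ m₂ : Prop) [Decidable m₁]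
    [Decidable m₂] :
    pairStatusProb p A B m₁ m₂ =
      if m₁ then (if m₂ then p ^ 2 * bothHitProb A B else pef K P p - p ^ 2 * bothHitProb A B)
      else (if m₂ then pef K P p - p ^ 2 * bothHitProb A B
        else 1 - 2 * pef K P p + p ^ 2 * bothHitProb A B) := by
  have hA := keyAvg_hits h A
  have hB := keyAvg_hits h B
  have h1 := keyAvg_const h (K := K) 1
  change keyAvg (fun s => statusProb p (Hits A s) m₁ * statusProb p (Hits B s) m₂) = _
  have hlin : ∀ a b c d : ℝ, (∀ s, statusProb p (Hits A s) m₁ * statusProb p (Hits B s) m₂ =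
      a * 1 + b * (if Hits A s then 1 else 0) + c * (if Hits B s then 1 else 0) +
        d * (if Hits A s ∧ Hits B s then 1 else 0)) →
      keyAvg (fun s => statusProb p (Hits A s) m₁ * statusProb p (Hits B s) m₂) =
        a + b * psf K P + c * psf K P + d * bothHitProb A B := by
    intro a b c d hs
    simp only [hs, keyAvg_add, keyAvg_mul, hA, hB, h1, bothHitProb]
    ring
  by_cases hm₁ : m₁ <;> by_cases hm₂ : m₂
  · refine (hlin 0 0 0 (p ^ 2) fun s => ?_).trans ?_
    · by_cases ha : Hits A s <;> by_cases hb : Hits B s <;>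
        simp [statusProb, hm₁, hm₂, ha, hb]
      ring
    · simp only [hm₁, hm₂, if_true, pef]
      ring
  · refine (hlin 0 p 0 (-p ^ 2) fun s => ?_).trans ?_
    · by_cases ha : Hits A s <;> by_cases hb : Hits B s <;>
        simp [statusProb, hm₁, hm₂, ha, hb]
      ring
    · simp only [hm₁, hm₂, if_true, if_false, pef]
      ring
  · refine (hlin 0 0 p (-p ^ 2) fun s => ?_).trans ?_
    · by_cases ha : Hits A s <;> by_cases hb : Hits B s <;>
        simp [statusProb, hm₁, hm₂, ha, hb]
      ring
    · simp only [hm₁, hm₂, if_true, if_false, pef]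
      ring
  · refine (hlin 1 (-p) (-p) (p ^ 2) fun s => ?_).trans ?_
    · by_cases ha : Hits A s <;> by_cases hb : Hits B s <;>
        simp [statusProb, hm₁, hm₂, ha, hb] <;> ring
    · simp only [hm₁, hm₂, if_false, pef]
      ring

end keyAvg

section counting

variable {W : Type*} [Fintype W] [DecidableEq W]

lemma prod_status_eq (q d b : ℝ) (X Y : Finset W) :
    ∏ z, (if z ∈ X then (if z ∈ Y then q else d) else (if z ∈ Y then d else b)) =
      q ^ (X ∩ Y).card * d ^ (X \ Y).card * d ^ (Y \ X).card * b ^ (X ∪ Y)ᶜ.card := by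
  have h : ∀ z, (if z ∈ X then (if z ∈ Y then q else d) else (if z ∈ Y then d else b)) =
      (if z ∈ X ∩ Y then q else 1) * (if z ∈ X \ Y then d else 1) *
        (if z ∈ Y \ X then d else 1) * (if z ∈ (X ∪ Y)ᶜ then b else 1) := by
    intro z
    by_cases hX : z ∈ X <;> by_cases hY : z ∈ Y <;> simp [hX, hY]
  simp only [h, Finset.prod_mul_distrib, Finset.prod_ite_mem, Finset.univ_inter, Finset.prod_const]

lemma sum_powersetCard_eq_keyRing (N ℓ : ℕ) (g : Finset (Fin N) → ℝ) :
    ∑ X ∈ Finset.powersetCard ℓ (Finset.univ : Finset (Fin N)), g X = ∑ X : KeyRing N ℓ, g X.1 :=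
  Finset.sum_subtype _ (by simp) _

lemma sum_powersetCard_pow_inter_le {ℓ : ℕ} (hℓ : ℓ ≤ Fintype.card W) {τ : ℝ} (hτ : 0 ≤ τ) :
    ∑ X ∈ Finset.powersetCard ℓ (Finset.univ : Finset W),
      ∑ Y ∈ Finset.powersetCard ℓ (Finset.univ : Finset W), τ ^ (X ∩ Y).card ≤
    ((Fintype.card W).choose ℓ : ℝ) ^ 2 * Real.exp (τ * ((ℓ : ℝ) ^ 2 / Fintype.card W)) := by
  set N := Fintype.card W with hN
  have hC : (0 : ℝ) < N.choose ℓ := by exact_mod_cast Nat.choose_pos hℓ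
  have huniv : (Finset.univ : Finset W) =
      (Finset.univ : Finset (Fin N)).map (Fintype.equivFin W).symm.toEmbedding := by simp
  rw [huniv]
  simp only [Finset.powersetCard_map, Finset.sum_map, RelEmbedding.coe_toEmbedding,
    Finset.mapEmbedding_apply, ← Finset.map_inter, Finset.card_map]
  rw [sum_powersetCard_eq_keyRing]
  have hX : ∀ X : KeyRing N ℓ,
      ∑ Y ∈ Finset.powersetCard ℓ (Finset.univ : Finset (Fin N)), τ ^ (X.1 ∩ Y).card ≤
        N.choose ℓ * Real.exp (τ * ((ℓ : ℝ) ^ 2 / N)) := by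
    intro X
    rw [sum_powersetCard_eq_keyRing]
    have h1 := keyAvg_hits_pow_le hℓ X hτ
    have h2 : keyAvg (fun Y : KeyRing N ℓ => τ ^ (X.1 ∩ Y.1).card) ≤
        keyAvg (fun Y : KeyRing N ℓ => 1 + if Hits X Y then τ ^ (X.1 ∩ Y.1).card else 0) := by
      refine keyAvg_mono fun Y => ?_
      split_ifs with hh
      · simp
      · rw [Finset.not_nonempty_iff_eq_empty.1 hh]
        simp
    rw [keyAvg_add, keyAvg_const hℓ] at h2
    have h3 : keyAvg (fun Y : KeyRing N ℓ => τ ^ (X.1 ∩ Y.1).card) =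
        (N.choose ℓ : ℝ)⁻¹ * ∑ Y : KeyRing N ℓ, τ ^ (X.1 ∩ Y.1).card := by
      rw [keyAvg, ← Finset.mul_sum, card_keyRing]
    rw [h3, inv_mul_eq_div] at h2
    rw [mul_comm, ← div_le_iff₀ hC]
    linarith
  refine (Finset.sum_le_sum fun X _ => hX X).trans (le_of_eq ?_)
  rw [Finset.sum_const, Finset.card_univ, card_keyRing, nsmul_eq_mul]
  ring

variable {P K : ℕ} {p : ℝ} {A B : KeyRing P K}

lemma condDegProb_eq (h : K ≤ P) (p : ℝ) (ℓ : ℕ) (A B : KeyRing P K) :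
    condDegProb p ℓ W A B =
      ∑ X ∈ Finset.powersetCard ℓ (Finset.univ : Finset W),
        ∑ Y ∈ Finset.powersetCard ℓ (Finset.univ : Finset W),
          (p ^ 2 * bothHitProb A B) ^ (X ∩ Y).card *
            (pef K P p - p ^ 2 * bothHitProb A B) ^ (X \ Y).card *
            (pef K P p - p ^ 2 * bothHitProb A B) ^ (Y \ X).card *
            (1 - 2 * pef K P p + p ^ 2 * bothHitProb A B) ^ (X ∪ Y)ᶜ.card := by
  simp only [condDegProb, pairStatusProb_eq h, prod_status_eq]

lemma sq_mul_bothHitProb_le_pef (h : K ≤ P) (h0 : 0 ≤ p) (h1 : p ≤ 1) :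
    p ^ 2 * bothHitProb A B ≤ pef K P p := by
  have := bothHitProb_le_psf h A B
  have h2 := psf_nonneg h
  unfold pef
  calc p ^ 2 * bothHitProb A B ≤ p ^ 2 * psf K P := by gcongr
    _ ≤ p * psf K P := by gcongr; nlinarith

lemma condDegProb_le {n ℓ : ℕ} (h : K ≤ P) (h0 : 0 ≤ p) (h1 : p ≤ 1) (he : 0 < pef K P p)
    (he2 : 2 * pef K P p ≤ 1) (hW : Fintype.card W + 2 = n) (hn : 2 * ℓ ≤ Fintype.card W) :
    condDegProb p ℓ W A B ≤
      (1 / (ℓ.factorial : ℝ) ^ 2 * (pef K P p * n) ^ (2 * ℓ) * Real.exp (-2 * (pef K P p * n))) *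
        Real.exp (p ^ 2 * bothHitProb A B * n + pef K P p * (4 + 4 * ℓ) +
          p ^ 2 * bothHitProb A B / pef K P p ^ 2 * ((ℓ : ℝ) ^ 2 / Fintype.card W)) := by
  rw [condDegProb_eq h]
  set q := p ^ 2 * bothHitProb A B with hq
  set e := pef K P p with hedef
  set N := Fintype.card W with hN
  have hq0 : 0 ≤ q := mul_nonneg (by positivity) (bothHitProb_nonneg A B)
  have hqe : q ≤ e := sq_mul_bothHitProb_le_pef h h0 h1
  have hb0 : 0 ≤ 1 - 2 * e + q := by linarith
  have hb1 : 1 - 2 * e + q ≤ 1 := by linarith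
  have hterm : ∀ X ∈ Finset.powersetCard ℓ (Finset.univ : Finset W),
      ∀ Y ∈ Finset.powersetCard ℓ (Finset.univ : Finset W),
      q ^ (X ∩ Y).card * (e - q) ^ (X \ Y).card * (e - q) ^ (Y \ X).card *
        (1 - 2 * e + q) ^ (X ∪ Y)ᶜ.card ≤
      (1 - 2 * e + q) ^ (N - 2 * ℓ) * e ^ (2 * ℓ) * (q / e ^ 2) ^ (X ∩ Y).card := by
    intro X hX Y hY
    rw [Finset.mem_powersetCard_univ] at hX hY
    have hXY := Finset.card_sdiff_add_card_inter X Y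
    have hYX := Finset.card_sdiff_add_card_inter Y X
    rw [Finset.inter_comm Y X] at hYX
    have hun := Finset.card_union_le X Y
    have hcompl : N - 2 * ℓ ≤ (X ∪ Y)ᶜ.card := by rw [Finset.card_compl]; omega
    have hsplit : e ^ (2 * ℓ) * (q / e ^ 2) ^ (X ∩ Y).card =
        q ^ (X ∩ Y).card * (e ^ (X \ Y).card * e ^ (Y \ X).card) := by
      have h2 : 2 * ℓ = (X \ Y).card + (Y \ X).card + 2 * (X ∩ Y).card := by omega
      rw [h2, div_pow, pow_add, pow_add, pow_mul]
      field_simp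
    have hp := pow_le_pow_of_le_one hb0 hb1 hcompl
    have hd : 0 ≤ e - q := by linarith
    have hd' : e - q ≤ e := by linarith
    calc _ ≤ q ^ (X ∩ Y).card * e ^ (X \ Y).card * e ^ (Y \ X).card *
          (1 - 2 * e + q) ^ (N - 2 * ℓ) := by gcongr
      _ = _ := by
        rw [mul_assoc _ (e ^ (2 * ℓ)), hsplit]
        ring
  have hexp : (1 - 2 * e + q) ^ (N - 2 * ℓ) ≤
      Real.exp (-2 * (e * n)) * Real.exp (q * n + e * (4 + 4 * ℓ)) := by
    have h2 : 1 - 2 * e + q ≤ Real.exp (-2 * e + q) := by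
      linarith [Real.add_one_le_exp (-2 * e + q)]
    refine (pow_le_pow_left₀ hb0 h2 _).trans ?_
    rw [← Real.exp_nat_mul, ← Real.exp_add]
    apply Real.exp_le_exp.2
    rw [Nat.cast_sub hn, ← hW]
    push_cast
    have : (0 : ℝ) ≤ q * (2 + 2 * ℓ) := by positivity
    nlinarith
  have hch : (N.choose ℓ : ℝ) ≤ (n : ℝ) ^ ℓ / ℓ.factorial := by
    refine (Nat.choose_le_pow_div ℓ N).trans ?_
    have : (N : ℝ) ≤ n := by rw [← hW]; push_cast; linarith
    gcongr
  calc _ ≤ ∑ X ∈ Finset.powersetCard ℓ (Finset.univ : Finset W),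
        ∑ Y ∈ Finset.powersetCard ℓ (Finset.univ : Finset W),
          (1 - 2 * e + q) ^ (N - 2 * ℓ) * e ^ (2 * ℓ) * (q / e ^ 2) ^ (X ∩ Y).card :=
        Finset.sum_le_sum fun X hX => Finset.sum_le_sum fun Y hY => hterm X hX Y hY
    _ = (1 - 2 * e + q) ^ (N - 2 * ℓ) * e ^ (2 * ℓ) *
        ∑ X ∈ Finset.powersetCard ℓ (Finset.univ : Finset W),
          ∑ Y ∈ Finset.powersetCard ℓ (Finset.univ : Finset W), (q / e ^ 2) ^ (X ∩ Y).card := by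
        simp only [Finset.mul_sum]
    _ ≤ (Real.exp (-2 * (e * n)) * Real.exp (q * n + e * (4 + 4 * ℓ))) * e ^ (2 * ℓ) *
        (((n : ℝ) ^ ℓ / ℓ.factorial) ^ 2 * Real.exp (q / e ^ 2 * ((ℓ : ℝ) ^ 2 / N))) := by
        have hs := sum_powersetCard_pow_inter_le (W := W) (ℓ := ℓ) (by omega)
          (τ := q / e ^ 2) (by positivity)
        have hc2 : (N.choose ℓ : ℝ) ^ 2 * Real.exp (q / e ^ 2 * ((ℓ : ℝ) ^ 2 / N)) ≤
          ((n : ℝ) ^ ℓ / ℓ.factorial) ^ 2 * Real.exp (q / e ^ 2 * ((ℓ : ℝ) ^ 2 / N)) := by gcongr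
        have hs2 := hs.trans hc2
        gcongr
    _ = _ := by
        rw [Real.exp_add (q * n + e * (4 + 4 * ℓ))]
        field_simp
        ring

lemma le_condDegProb {ℓ : ℕ} (h : K ≤ P) (h0 : 0 ≤ p) (h1 : p ≤ 1)
    (he2 : 2 * pef K P p ≤ 1) (hn : 2 * ℓ ≤ Fintype.card W) :
    1 / (ℓ.factorial : ℝ) ^ 2 *
      (((Fintype.card W : ℝ) - 2 * ℓ) * (pef K P p - p ^ 2 * bothHitProb A B)) ^ (2 * ℓ) *
      (1 - 2 * pef K P p) ^ Fintype.card W ≤ condDegProb p ℓ W A B := by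
  rw [condDegProb_eq h]
  have hq0 : 0 ≤ p ^ 2 * bothHitProb A B := mul_nonneg (by positivity) (bothHitProb_nonneg A B)
  have hqe : p ^ 2 * bothHitProb A B ≤ pef K P p := sq_mul_bothHitProb_le_pef h h0 h1
  set q := p ^ 2 * bothHitProb A B with hq
  set e := pef K P p with hedef
  set N := Fintype.card W with hN
  have hd0 : 0 ≤ e - q := by linarith
  have hb0 : 0 ≤ 1 - 2 * e + q := by linarith
  have hch : ((N : ℝ) - 2 * ℓ) ^ ℓ / ℓ.factorial ≤ (N - ℓ).choose ℓ := by
    rw [div_le_iff₀' (by positivity)]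
    have h2 : ((N - 2 * ℓ : ℕ) : ℝ) ^ ℓ ≤ ((N - ℓ).descFactorial ℓ : ℕ) := by
      exact_mod_cast (Nat.pow_le_pow_left (by omega) ℓ).trans
        (Nat.pow_sub_le_descFactorial (N - ℓ) ℓ)
    rw [Nat.descFactorial_eq_factorial_mul_choose, Nat.cast_sub hn] at h2
    push_cast at h2
    exact h2
  have hch' : ((N : ℝ) - 2 * ℓ) ^ ℓ / ℓ.factorial ≤ N.choose ℓ :=
    hch.trans (Nat.cast_le.2 (Nat.choose_le_choose ℓ (Nat.sub_le N ℓ)))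
  have hN2 : 0 ≤ (N : ℝ) - 2 * ℓ := by
    have : ((2 * ℓ : ℕ) : ℝ) ≤ N := Nat.cast_le.2 hn
    push_cast at this
    linarith
  calc _ = (((N : ℝ) - 2 * ℓ) ^ ℓ / ℓ.factorial) * ((((N : ℝ) - 2 * ℓ) ^ ℓ / ℓ.factorial) *
        ((e - q) ^ (2 * ℓ) * (1 - 2 * e) ^ N)) := by
        rw [mul_pow, two_mul ℓ, pow_add]
        field_simp
    _ ≤ (N.choose ℓ : ℝ) * (((N - ℓ).choose ℓ : ℕ) * ((e - q) ^ (2 * ℓ) * (1 - 2 * e) ^ N)) := by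
        have : 0 ≤ 1 - 2 * e := by linarith
        gcongr
    _ = ∑ X ∈ Finset.powersetCard ℓ (Finset.univ : Finset W),
        ∑ Y ∈ Finset.powersetCard ℓ Xᶜ, ((e - q) ^ (2 * ℓ) * (1 - 2 * e) ^ N) := by
        rw [Finset.sum_congr rfl (g := fun _ => (((N - ℓ).choose ℓ : ℕ) : ℝ) *
          ((e - q) ^ (2 * ℓ) * (1 - 2 * e) ^ N))]
        · rw [Finset.sum_const, Finset.card_powersetCard, Finset.card_univ, nsmul_eq_mul]
        · intro X hX
          rw [Finset.mem_powersetCard_univ] at hX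
          rw [Finset.sum_const, Finset.card_powersetCard, Finset.card_compl, hX, nsmul_eq_mul]
    _ ≤ _ := by
        refine Finset.sum_le_sum fun X hX => ?_
        refine le_trans (Finset.sum_le_sum fun Y hY => ?_)
          (Finset.sum_le_sum_of_subset_of_nonneg
            (Finset.powersetCard_mono (Finset.subset_univ Xᶜ)) fun Y _ _ => by positivity)
        rw [Finset.mem_powersetCard_univ] at hX
        rw [Finset.mem_powersetCard, Finset.subset_compl_iff_disjoint_left] at hY
        rw [Finset.disjoint_iff_inter_eq_empty.1 hY.1, Finset.sdiff_eq_self_of_disjoint hY.1,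
          Finset.sdiff_eq_self_of_disjoint hY.1.symm, hX, hY.2, Finset.card_empty, pow_zero,
          one_mul, ← pow_add, ← two_mul]
        have hle : (X ∪ Y)ᶜ.card ≤ N := Finset.card_le_univ _
        have h3 : (1 - 2 * e) ^ N ≤ (1 - 2 * e + q) ^ (X ∪ Y)ᶜ.card :=
          (pow_le_pow_of_le_one (by linarith) (by linarith) hle).trans
            (pow_le_pow_left₀ (by linarith) (by linarith) _)
        gcongr

end counting

lemma card_others {n : ℕ} {x y : Fin n} (hxy : x ≠ y) : Fintype.card (Others x y) + 2 = n := by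
  have h : (Finset.univ.filter fun z : Fin n => z ≠ x ∧ z ≠ y) = {x, y}ᶜ := by
    ext z
    simp
  have h2 := Finset.card_add_card_compl ({x, y} : Finset (Fin n))
  rw [Finset.card_pair hxy, Fintype.card_fin] at h2
  rw [Fintype.card_subtype, h]
  omega

/-- The leading term of the joint degree probability, in terms of the edge probability `e`. -/
def jointDegLimit (n ℓ : ℕ) (e : ℝ) : ℝ :=
  1 / (ℓ.factorial : ℝ) ^ 2 * (e * n) ^ (2 * ℓ) * Real.exp (-2 * (e * n))

section finiteBounds

variable {n K P : ℕ} {p : ℝ} {x y : Fin n} {ℓ : ℕ}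

lemma gonMeasure_event_eq_keyAvg (h : K ≤ P) (h0 : 0 ≤ p) (h1 : p ≤ 1) (hxy : x ≠ y) :
    (gonMeasure n K P p
      (degEvent n K P x ℓ ∩ degEvent n K P y ℓ ∩ (edgeEvent n K P x y)ᶜ)).toReal =
    keyAvg fun A : KeyRing P K => keyAvg fun B : KeyRing P K =>
      (1 - if Hits A B then p else 0) * condDegProb p ℓ (Others x y) A B := by
  rw [gonMeasure_event_eq h0 h1 h hxy]
  simp only [keyAvg, Finset.mul_sum]
  exact Finset.sum_congr rfl fun A _ => Finset.sum_congr rfl fun B _ => by ring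

lemma sq_mul_bothHitProb_le (h : K ≤ P) (A B : KeyRing P K)
    (hlam : (K : ℝ) ^ 2 / P ≤ 2 * psf K P) :
    p ^ 2 * bothHitProb A B ≤
      (A.1 ∩ B.1).card * (p ^ 2 * ((K : ℝ) / P)) + 4 * pef K P p ^ 2 := by
  have h2 := bothHitProb_le h A B
  have h3 : ((K : ℝ) ^ 2 / P) ^ 2 ≤ (2 * psf K P) ^ 2 := by gcongr
  unfold pef
  calc p ^ 2 * bothHitProb A B
      ≤ p ^ 2 * ((A.1 ∩ B.1).card * ((K : ℝ) / P) + (2 * psf K P) ^ 2) := by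
        gcongr
        linarith
    _ = _ := by ring

lemma gonMeasure_event_le (h : K ≤ P) (h0 : 0 ≤ p) (h1 : p ≤ 1) (hxy : x ≠ y)
    (he : 0 < pef K P p) (he2 : 2 * pef K P p ≤ 1) (hn : 2 * ℓ + 2 < n)
    (hlam : (K : ℝ) ^ 2 / P ≤ 2 * psf K P) :
    (gonMeasure n K P p
      (degEvent n K P x ℓ ∩ degEvent n K P y ℓ ∩ (edgeEvent n K P x y)ᶜ)).toReal ≤
    jointDegLimit n ℓ (pef K P p) *
      (Real.exp (4 * (n * pef K P p ^ 2) + pef K P p * (4 + 4 * ℓ) +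
          4 * ((ℓ : ℝ) ^ 2 / ((n : ℝ) - 2))) +
        Real.exp (4 * (n * pef K P p ^ 2) + pef K P p * (4 + 4 * ℓ) +
          (ℓ : ℝ) ^ 2 / (((n : ℝ) - 2) * pef K P p)) *
        (Real.exp (Real.exp (n * (p ^ 2 * ((K : ℝ) / P))) * ((K : ℝ) ^ 2 / P)) - 1)) := by
  rw [gonMeasure_event_eq_keyAvg h h0 h1 hxy]
  set e := pef K P p with hedef
  have hcard := card_others hxy
  have hN : (Fintype.card (Others x y) : ℝ) = n - 2 := by
    have : ((Fintype.card (Others x y) + 2 : ℕ) : ℝ) = n := by exact_mod_cast hcard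
    push_cast at this
    linarith
  have hNpos : (0 : ℝ) < (n : ℝ) - 2 := by
    rw [← hN]
    exact_mod_cast (by omega : 0 < Fintype.card (Others x y))
  set M := jointDegLimit n ℓ e with hM
  have hM0 : 0 ≤ M := by
    rw [hM, jointDegLimit]
    positivity
  set U := Real.exp (4 * (n * e ^ 2) + e * (4 + 4 * ℓ) + 4 * ((ℓ : ℝ) ^ 2 / ((n : ℝ) - 2)))
  set C := Real.exp (4 * (n * e ^ 2) + e * (4 + 4 * ℓ) + (ℓ : ℝ) ^ 2 / (((n : ℝ) - 2) * e))
  set t := Real.exp (n * (p ^ 2 * ((K : ℝ) / P))) with ht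
  have hpt : ∀ A B : KeyRing P K,
      (1 - if Hits A B then p else 0) * condDegProb p ℓ (Others x y) A B ≤
        M * U + M * C * (if Hits A B then t ^ (A.1 ∩ B.1).card else 0) := by
    intro A B
    have hF := condDegProb_le (A := A) (B := B) (ℓ := ℓ) h h0 h1 he he2 hcard (by omega)
    have hq := sq_mul_bothHitProb_le (p := p) h A B hlam
    have hqe : p ^ 2 * bothHitProb A B ≤ e := sq_mul_bothHitProb_le_pef h h0 h1
    rw [← hedef, hN] at hF
    set q := p ^ 2 * bothHitProb A B with hqdef
    have hq0 : 0 ≤ q := mul_nonneg (by positivity) (bothHitProb_nonneg A B)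
    change _ ≤ M * _ at hF
    split_ifs with hh
    · have hF0 : 0 ≤ condDegProb p ℓ (Others x y) A B := by
        rw [condDegProb_eq h]
        refine Finset.sum_nonneg fun X _ => Finset.sum_nonneg fun Y _ => ?_
        have : 0 ≤ pef K P p - p ^ 2 * bothHitProb A B := by linarith
        have : 0 ≤ 1 - 2 * pef K P p + p ^ 2 * bothHitProb A B := by linarith
        positivity
      have hle : Real.exp (q * n + e * (4 + 4 * ℓ) + q / e ^ 2 * ((ℓ : ℝ) ^ 2 / (n - 2))) ≤
          C * t ^ (A.1 ∩ B.1).card := by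
        rw [ht, ← Real.exp_nat_mul, ← Real.exp_add]
        apply Real.exp_le_exp.2
        have e1 : q / e ^ 2 * ((ℓ : ℝ) ^ 2 / (n - 2)) ≤ (ℓ : ℝ) ^ 2 / (((n : ℝ) - 2) * e) := by
          calc q / e ^ 2 * ((ℓ : ℝ) ^ 2 / (n - 2)) ≤ e / e ^ 2 * ((ℓ : ℝ) ^ 2 / (n - 2)) := by
                gcongr
            _ = _ := by field_simp
        have e2 : q * n ≤ ((A.1 ∩ B.1).card * (p ^ 2 * ((K : ℝ) / P)) + 4 * e ^ 2) * n := by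
          gcongr
        linarith
      calc (1 - p) * condDegProb p ℓ (Others x y) A B ≤ condDegProb p ℓ (Others x y) A B :=
            mul_le_of_le_one_left hF0 (by linarith)
        _ ≤ M * (C * t ^ (A.1 ∩ B.1).card) := hF.trans (mul_le_mul_of_nonneg_left hle hM0)
        _ ≤ _ := by
          have : 0 ≤ M * U := mul_nonneg hM0 (Real.exp_pos _).le
          linarith
    · rw [sub_zero, one_mul, mul_zero, add_zero]
      refine hF.trans (mul_le_mul_of_nonneg_left (Real.exp_le_exp.2 ?_) hM0)
      rw [Finset.not_nonempty_iff_eq_empty.1 hh, Finset.card_empty, Nat.cast_zero, zero_mul,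
        zero_add] at hq
      have e1 : q / e ^ 2 * ((ℓ : ℝ) ^ 2 / (n - 2)) ≤ 4 * ((ℓ : ℝ) ^ 2 / ((n : ℝ) - 2)) := by
        have : q / e ^ 2 ≤ 4 := by
          rw [div_le_iff₀ (by positivity)]
          exact hq
        gcongr
      have e2 : q * n ≤ (4 * e ^ 2) * n := by gcongr
      linarith
  have hA : ∀ A : KeyRing P K, (keyAvg fun B : KeyRing P K =>
      (1 - if Hits A B then p else 0) * condDegProb p ℓ (Others x y) A B) ≤
        M * U + M * C * (Real.exp (t * ((K : ℝ) ^ 2 / P)) - 1) := by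
    intro A
    refine (keyAvg_mono (hpt A)).trans ?_
    rw [keyAvg_add, keyAvg_const h, keyAvg_mul]
    have := keyAvg_hits_pow_le h A (t := t) (Real.exp_pos _).le
    have hMC : 0 ≤ M * C := mul_nonneg hM0 (Real.exp_pos _).le
    gcongr
  refine (keyAvg_mono hA).trans ?_
  rw [keyAvg_const h]
  exact le_of_eq (by ring)

lemma one_sub_le_pow_mul_exp {e : ℝ} (he : 0 ≤ e) (he2 : 2 * e ≤ 1) (n : ℕ) :
    1 - 4 * (n * e ^ 2) ≤ (1 - 2 * e) ^ n * Real.exp (2 * (e * n)) := by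
  have h1 : 1 + (n : ℝ) * (-(4 * e ^ 2)) ≤ (1 + -(4 * e ^ 2)) ^ n :=
    one_add_mul_le_pow (by nlinarith) n
  have h2 : (1 + -(4 * e ^ 2)) ^ n ≤ ((1 - 2 * e) * Real.exp (2 * e)) ^ n := by
    refine pow_le_pow_left₀ (by nlinarith) ?_ n
    have := Real.add_one_le_exp (2 * e)
    nlinarith
  rw [mul_pow, ← Real.exp_nat_mul, show (n : ℝ) * (2 * e) = 2 * (e * n) by ring] at h2
  linarith

lemma le_gonMeasure_event (h : K ≤ P) (h0 : 0 ≤ p) (h1 : p ≤ 1) (hxy : x ≠ y)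
    (he : 0 < pef K P p) (he2 : 4 * pef K P p ≤ 1) (hn : 2 * ℓ + 2 < n)
    (hlam : (K : ℝ) ^ 2 / P ≤ 2 * psf K P) :
    jointDegLimit n ℓ (pef K P p) * ((1 - psf K P) *
      ((1 - (2 + 2 * ℓ) / (n : ℝ)) * (1 - 4 * pef K P p)) ^ (2 * ℓ) *
        (1 - 4 * (n * pef K P p ^ 2))) ≤
    (gonMeasure n K P p
      (degEvent n K P x ℓ ∩ degEvent n K P y ℓ ∩ (edgeEvent n K P x y)ᶜ)).toReal := by
  rw [gonMeasure_event_eq_keyAvg h h0 h1 hxy]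
  set e := pef K P p with hedef
  have hcard := card_others hxy
  have hN : (Fintype.card (Others x y) : ℝ) = n - 2 := by
    have : ((Fintype.card (Others x y) + 2 : ℕ) : ℝ) = n := by exact_mod_cast hcard
    push_cast at this
    linarith
  have hn0 : (0 : ℝ) < n := by exact_mod_cast (by omega : 0 < n)
  have hnl : (0 : ℝ) ≤ (n : ℝ) - 2 - 2 * ℓ := by
    have : ((2 * ℓ + 2 : ℕ) : ℝ) ≤ n := by exact_mod_cast hn.le
    push_cast at this
    linarith
  set L : ℝ := 1 / (ℓ.factorial : ℝ) ^ 2 * (((n : ℝ) - 2 - 2 * ℓ) * (e - 4 * e ^ 2)) ^ (2 * ℓ) *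
    (1 - 2 * e) ^ n with hL
  have hd0 : 0 ≤ e - 4 * e ^ 2 := by nlinarith
  have hpt : ∀ A B : KeyRing P K, L * (1 - if Hits A B then 1 else 0) ≤
      (1 - if Hits A B then p else 0) * condDegProb p ℓ (Others x y) A B := by
    intro A B
    have hF := le_condDegProb (W := Others x y) (A := A) (B := B) (ℓ := ℓ) h h0 h1
      (by linarith) (by omega)
    have hq := sq_mul_bothHitProb_le (p := p) h A B hlam
    have hqe : p ^ 2 * bothHitProb A B ≤ e := sq_mul_bothHitProb_le_pef h h0 h1
    rw [← hedef, hN] at hF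
    have h2e : 0 ≤ 1 - 2 * e := by linarith
    split_ifs with hh
    · rw [sub_self, mul_zero]
      refine mul_nonneg (by linarith) (le_trans ?_ hF)
      have : 0 ≤ e - p ^ 2 * bothHitProb A B := by linarith
      positivity
    · rw [sub_zero, mul_one, one_mul]
      refine le_trans ?_ hF
      rw [Finset.not_nonempty_iff_eq_empty.1 hh, Finset.card_empty, Nat.cast_zero, zero_mul,
        zero_add] at hq
      have hpow : (1 - 2 * e) ^ n ≤ (1 - 2 * e) ^ Fintype.card (Others x y) :=
        pow_le_pow_of_le_one h2e (by linarith) (by omega)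
      rw [hL]
      gcongr
  have hA : ∀ A : KeyRing P K, L * (1 - psf K P) ≤ (keyAvg fun B : KeyRing P K =>
      (1 - if Hits A B then p else 0) * condDegProb p ℓ (Others x y) A B) := by
    intro A
    refine le_trans (le_of_eq ?_) (keyAvg_mono (hpt A))
    rw [keyAvg_mul, keyAvg_sub, keyAvg_const h, keyAvg_hits h]
  refine le_trans ?_ (keyAvg_mono hA)
  rw [keyAvg_const h]
  have hexp := one_sub_le_pow_mul_exp he.le (by linarith) n
  have hexp' : Real.exp (-2 * (e * n)) * (1 - 4 * (n * e ^ 2)) ≤ (1 - 2 * e) ^ n := by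
    rw [neg_mul, Real.exp_neg, inv_mul_le_iff₀ (Real.exp_pos _), mul_comm (Real.exp _)]
    exact hexp
  have hps := psf_le_one h
  calc _ = (1 / (ℓ.factorial : ℝ) ^ 2 * (((n : ℝ) - 2 - 2 * ℓ) * (e - 4 * e ^ 2)) ^ (2 * ℓ) *
        (Real.exp (-2 * (e * n)) * (1 - 4 * (n * e ^ 2)))) * (1 - psf K P) := by
        have : ((n : ℝ) - 2 - 2 * ℓ) * (e - 4 * e ^ 2) =
            (e * n) * ((1 - (2 + 2 * ℓ) / (n : ℝ)) * (1 - 4 * e)) := by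
          field_simp
          ring
        rw [this, jointDegLimit, mul_pow (e * n)]
        ring
    _ ≤ _ := by
        rw [hL]
        have : 0 ≤ 1 - psf K P := by linarith
        gcongr

end finiteBounds

section asymptotics

variable {K P : ℕ → ℕ} {p : ℕ → ℝ}

lemma sq_div_pos {K P : ℕ} (h : K ≤ P) (hK : 0 < K) : (0 : ℝ) < (K : ℝ) ^ 2 / P := by
  have hP : 0 < P := hK.trans_le h
  positivity

lemma psf_pos {K P : ℕ} (h : K ≤ P) (hK : 0 < K) : 0 < psf K P := by
  have h1 := sq_div_mul_one_sub_psf_le h hK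
  have h2 := sq_div_pos h hK
  by_contra h3
  have h4 : psf K P = 0 := le_antisymm (not_lt.1 h3) (psf_nonneg h)
  rw [h4] at h1
  linarith

lemma eventually_log_add_le (k : ℕ) {α : ℕ → ℝ} (hα : Tendsto α atTop atBot) :
    ∀ᶠ n : ℕ in atTop, Real.log n + ((k : ℝ) - 1) * Real.log (Real.log n) + α n ≤
      21 / 20 * Real.log n := by
  have hlog : Tendsto (fun n : ℕ => Real.log n) atTop atTop :=
    Real.tendsto_log_atTop.comp tendsto_natCast_atTop_atTop
  have h1 := hlog.eventually
    (Real.isLittleO_log_id_atTop.bound (by positivity : (0 : ℝ) < 1 / (20 * (k + 1))))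
  filter_upwards [h1, hα.eventually_le_atBot 0, hlog.eventually_ge_atTop 1] with n h1 h2 h3
  have h4 : 0 ≤ Real.log (Real.log n) := Real.log_nonneg h3
  rw [id, Real.norm_of_nonneg h4, Real.norm_of_nonneg (by linarith), div_mul_eq_mul_div, one_mul,
    le_div_iff₀ (by positivity)] at h1
  nlinarith

lemma tendsto_log_pow_div_nat (m : ℕ) :
    Tendsto (fun n : ℕ => Real.log n ^ m / n) atTop (nhds 0) :=
  (Real.isLittleO_pow_log_id_atTop (n := m)).tendsto_div_nhds_zero.comp
    tendsto_natCast_atTop_atTop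

lemma tendsto_pef_zero (hpos : ∀ᶠ n : ℕ in atTop, 0 < pef (K n) (P n) (p n))
    (hle : ∀ᶠ n : ℕ in atTop, n * pef (K n) (P n) (p n) ≤ 21 / 20 * Real.log n) :
    Tendsto (fun n : ℕ => pef (K n) (P n) (p n)) atTop (nhds 0) := by
  have hlim := (tendsto_log_pow_div_nat 1).const_mul (21 / 20)
  rw [mul_zero] at hlim
  refine squeeze_zero' (hpos.mono fun n h => h.le) ?_ hlim
  filter_upwards [hle, eventually_gt_atTop 0] with n h hn
  have hn0 : (0 : ℝ) < n := by exact_mod_cast hn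
  rw [pow_one, ← mul_div_assoc, le_div_iff₀ hn0]
  linarith

lemma tendsto_mul_pef_sq_zero (hpos : ∀ᶠ n : ℕ in atTop, 0 < pef (K n) (P n) (p n))
    (hle : ∀ᶠ n : ℕ in atTop, n * pef (K n) (P n) (p n) ≤ 21 / 20 * Real.log n) :
    Tendsto (fun n : ℕ => (n : ℝ) * pef (K n) (P n) (p n) ^ 2) atTop (nhds 0) := by
  have hlim := (tendsto_log_pow_div_nat 2).const_mul ((21 / 20) ^ 2)
  rw [mul_zero] at hlim
  refine squeeze_zero' (Eventually.of_forall fun n => by positivity) ?_ hlim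
  filter_upwards [hle, hpos, eventually_gt_atTop 0] with n h he hn
  have hn0 : (0 : ℝ) < n := by exact_mod_cast hn
  rw [← mul_div_assoc, le_div_iff₀ hn0, ← mul_pow]
  calc (n : ℝ) * pef (K n) (P n) (p n) ^ 2 * n = (n * pef (K n) (P n) (p n)) ^ 2 := by ring
    _ ≤ _ := by gcongr

lemma eventually_sq_div_le (hKP : ∀ n, K n ≤ P n)
    (hps : Tendsto (fun n : ℕ => psf (K n) (P n)) atTop (nhds 0))
    (hK2 : ∀ᶠ n : ℕ in atTop, 2 ≤ K n) :
    ∀ᶠ n : ℕ in atTop, (K n : ℝ) ^ 2 / P n ≤ 12 / 11 * psf (K n) (P n) := by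
  filter_upwards [hK2, hps.eventually_le_const (by norm_num : (0 : ℝ) < 1 / 12)] with n h2 h3
  have h4 := sq_div_mul_one_sub_psf_le (hKP n) (by omega)
  have h5 := sq_div_pos (hKP n) (by omega)
  nlinarith

lemma tendsto_exp_mul_sq_div_zero (hKP : ∀ n, K n ≤ P n) (hp0 : ∀ n, 0 < p n)
    (hp1 : ∀ n, p n < 1)
    (hps : Tendsto (fun n : ℕ => psf (K n) (P n)) atTop (nhds 0))
    (hK2 : ∀ᶠ n : ℕ in atTop, 2 ≤ K n)
    (hle : ∀ᶠ n : ℕ in atTop, n * pef (K n) (P n) (p n) ≤ 21 / 20 * Real.log n) :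
    Tendsto (fun n : ℕ => Real.exp (n * (p n ^ 2 * ((K n : ℝ) / P n))) * ((K n : ℝ) ^ 2 / P n))
      atTop (nhds 0) := by
  have hlog : Tendsto (fun n : ℕ => Real.log n) atTop atTop :=
    Real.tendsto_log_atTop.comp tendsto_natCast_atTop_atTop
  have hlogexp : Tendsto (fun n : ℕ => 6 / 5 * (Real.log n ^ 2 * Real.exp (-(2 / 5) * Real.log n)))
      atTop (nhds 0) := by
    have h1 := (isLittleO_pow_exp_pos_mul_atTop 2
      (by norm_num : (0 : ℝ) < 2 / 5)).tendsto_div_nhds_zero.comp hlog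
    have h2 := h1.const_mul (6 / 5)
    rw [mul_zero] at h2
    refine h2.congr fun n => ?_
    rw [Function.comp_apply, neg_mul, Real.exp_neg, ← div_eq_mul_inv]
  have hlim := (hps.const_mul 4).add hlogexp
  rw [mul_zero, add_zero] at hlim
  refine squeeze_zero' (Eventually.of_forall fun n => by positivity) ?_ hlim
  filter_upwards [hK2, hle, eventually_sq_div_le hKP hps hK2, hlog.eventually_ge_atTop 1,
    eventually_gt_atTop 0] with n h2 hle hlam hlog1 hn
  have hn0 : (0 : ℝ) < n := by exact_mod_cast hn
  have hp := hp0 n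
  have hp1 := hp1 n
  have hlam0 := sq_div_pos (hKP n) (by omega : 0 < K n)
  have hpsn := psf_nonneg (hKP n)
  have hP0 : (0 : ℝ) < P n := by exact_mod_cast (by have := hKP n; omega : 0 < P n)
  have hhalf : (K n : ℝ) / P n ≤ (K n : ℝ) ^ 2 / P n / 2 := by
    rw [div_div, div_le_div_iff₀ hP0 (by positivity)]
    have : (2 : ℝ) ≤ K n := by exact_mod_cast h2
    have h3 : (K n : ℝ) * 2 ≤ (K n : ℝ) ^ 2 := by nlinarith
    calc (K n : ℝ) * (P n * 2) = (K n : ℝ) * 2 * P n := by ring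
      _ ≤ _ := by gcongr
  set lam := (K n : ℝ) ^ 2 / P n with hlamdef
  have hnpl : n * p n * lam ≤ 6 / 5 * Real.log n := by
    calc n * p n * lam ≤ n * p n * (12 / 11 * psf (K n) (P n)) := by gcongr
      _ = 12 / 11 * (n * pef (K n) (P n) (p n)) := by rw [pef]; ring
      _ ≤ _ := by linarith
  have hexp : n * (p n ^ 2 * ((K n : ℝ) / P n)) ≤ 3 / 5 * (p n * Real.log n) := by
    calc n * (p n ^ 2 * ((K n : ℝ) / P n)) ≤ n * (p n ^ 2 * (lam / 2)) := by gcongr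
      _ = p n * (n * p n * lam) / 2 := by ring
      _ ≤ p n * (6 / 5 * Real.log n) / 2 := by gcongr
      _ = _ := by ring
  have hle1 : Real.exp (n * (p n ^ 2 * ((K n : ℝ) / P n))) ≤
      Real.exp (3 / 5 * (p n * Real.log n)) := Real.exp_le_exp.2 hexp
  rcases le_total (p n * Real.log n) 1 with hc | hc
  · have h3 : Real.exp (3 / 5 * (p n * Real.log n)) ≤ 3 :=
      (Real.exp_le_exp.2 (by linarith : _ ≤ (1 : ℝ))).trans Real.exp_one_lt_three.le
    have h4 : Real.exp (n * (p n ^ 2 * ((K n : ℝ) / P n))) * lam ≤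
        3 * (12 / 11 * psf (K n) (P n)) := by
      gcongr
      exact hle1.trans h3
    have h5 : 0 ≤ 6 / 5 * (Real.log n ^ 2 * Real.exp (-(2 / 5) * Real.log n)) := by positivity
    linarith
  · have h3 : Real.exp (n * (p n ^ 2 * ((K n : ℝ) / P n))) ≤ Real.exp (3 / 5 * Real.log n) :=
      hle1.trans (Real.exp_le_exp.2 (by nlinarith))
    have h4 : lam ≤ 6 / 5 * Real.log n ^ 2 / n := by
      rw [le_div_iff₀ hn0]
      calc lam * n = n * lam * 1 := by ring
        _ ≤ n * lam * (p n * Real.log n) := by gcongr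
        _ = n * p n * lam * Real.log n := by ring
        _ ≤ 6 / 5 * Real.log n * Real.log n := by gcongr
        _ = _ := by ring
    calc Real.exp (n * (p n ^ 2 * ((K n : ℝ) / P n))) * lam
        ≤ Real.exp (3 / 5 * Real.log n) * (6 / 5 * Real.log n ^ 2 / n) := by gcongr
      _ = 6 / 5 * (Real.log n ^ 2 * Real.exp (-(2 / 5) * Real.log n)) := by
        have : Real.exp (-(2 / 5) * Real.log n) = Real.exp (3 / 5 * Real.log n) / n := by
          rw [show -(2 / 5) * Real.log n = 3 / 5 * Real.log n - Real.log n by ring, Real.exp_sub,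
            Real.exp_log hn0]
        rw [this]
        ring
      _ ≤ _ := by linarith

lemma tendsto_gonMeasure_event_div (hKP : ∀ n, K n ≤ P n) (hp0 : ∀ n, 0 < p n)
    (hp1 : ∀ n, p n < 1)
    (hps : Tendsto (fun n : ℕ => psf (K n) (P n)) atTop (nhds 0))
    (hK2 : ∀ᶠ n : ℕ in atTop, 2 ≤ K n)
    (hle : ∀ᶠ n : ℕ in atTop, n * pef (K n) (P n) (p n) ≤ 21 / 20 * Real.log n)
    {x y : ℕ} (hxy : x ≠ y) {ℓ : ℕ} {c : ℝ}
    (hc : ∀ᶠ n : ℕ in atTop, (ℓ : ℝ) ^ 2 / (((n : ℝ) - 2) * pef (K n) (P n) (p n)) ≤ c) :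
    Tendsto (fun n : ℕ =>
      (gonMeasure n (K n) (P n) (p n)
        (degEvent n (K n) (P n) x ℓ ∩ degEvent n (K n) (P n) y ℓ ∩
          (edgeEvent n (K n) (P n) x y)ᶜ)).toReal / jointDegLimit n ℓ (pef (K n) (P n) (p n)))
      atTop (nhds 1) := by
  have hpos : ∀ᶠ n : ℕ in atTop, 0 < pef (K n) (P n) (p n) :=
    hK2.mono fun n h => mul_pos (hp0 n) (psf_pos (hKP n) (by omega))
  have he := tendsto_pef_zero hpos hle
  have hne := tendsto_mul_pef_sq_zero hpos hle
  have hkey := tendsto_exp_mul_sq_div_zero hKP hp0 hp1 hps hK2 hle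
  have hinv : Tendsto (fun n : ℕ => ((n : ℝ))⁻¹) atTop (nhds 0) :=
    tendsto_inv_atTop_nhds_zero_nat
  have hinv2 : Tendsto (fun n : ℕ => ((n : ℝ) - 2)⁻¹) atTop (nhds 0) :=
    (tendsto_atTop_add_const_right _ (-2 : ℝ) tendsto_natCast_atTop_atTop).inv_tendsto_atTop
  have hlow : Tendsto (fun n : ℕ => (1 - psf (K n) (P n)) *
      ((1 - (2 + 2 * ℓ) / (n : ℝ)) * (1 - 4 * pef (K n) (P n) (p n))) ^ (2 * ℓ) *
        (1 - 4 * (n * pef (K n) (P n) (p n) ^ 2))) atTop (nhds 1) := by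
    have := ((hps.const_sub 1).mul ((((hinv.const_mul (2 + 2 * ℓ : ℝ)).const_sub 1).mul
      ((he.const_mul 4).const_sub 1)).pow (2 * ℓ))).mul ((hne.const_mul 4).const_sub 1)
    simpa [div_eq_mul_inv] using this
  have hbase : Tendsto (fun n : ℕ => 4 * ((n : ℝ) * pef (K n) (P n) (p n) ^ 2) +
      pef (K n) (P n) (p n) * (4 + 4 * ℓ)) atTop (nhds 0) := by
    simpa using (hne.const_mul 4).add (he.mul_const (4 + 4 * ℓ : ℝ))
  have hup : Tendsto (fun n : ℕ =>
      Real.exp (4 * (n * pef (K n) (P n) (p n) ^ 2) + pef (K n) (P n) (p n) * (4 + 4 * ℓ) +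
          4 * ((ℓ : ℝ) ^ 2 / ((n : ℝ) - 2))) +
        Real.exp (4 * (n * pef (K n) (P n) (p n) ^ 2) + pef (K n) (P n) (p n) * (4 + 4 * ℓ) + c) *
        (Real.exp (Real.exp (n * (p n ^ 2 * ((K n : ℝ) / P n))) * ((K n : ℝ) ^ 2 / P n)) - 1))
      atTop (nhds 1) := by
    have h1 := (Real.continuous_exp.tendsto _).comp
      (hbase.add ((hinv2.const_mul ((ℓ : ℝ) ^ 2)).const_mul 4))
    have h2 := (Real.continuous_exp.tendsto _).comp (hbase.add_const c)
    have h3 := ((Real.continuous_exp.tendsto _).comp hkey).sub_const 1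
    have := h1.add (h2.mul h3)
    simpa [div_eq_mul_inv, Function.comp_def] using this
  have hL : ∀ n : ℕ, 0 < n → 0 < pef (K n) (P n) (p n) →
      0 < jointDegLimit n ℓ (pef (K n) (P n) (p n)) := by
    intro n hn h
    have : (0 : ℝ) < n := by exact_mod_cast hn
    rw [jointDegLimit]
    positivity
  refine tendsto_of_tendsto_of_tendsto_of_le_of_le' hlow hup ?_ ?_
  · filter_upwards [hpos, eventually_sq_div_le hKP hps hK2, eventually_gt_atTop (2 * ℓ + 2),
      eventually_gt_atTop x, eventually_gt_atTop y,
      he.eventually_le_const (by norm_num : (0 : ℝ) < 1 / 4)] with n hpos hlam hn hx hy he4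
    rw [le_div_iff₀ (hL n (by omega) hpos), mul_comm]
    have hpsn := psf_nonneg (hKP n)
    exact le_gonMeasure_event (x := ⟨x, hx⟩) (y := ⟨y, hy⟩) (hKP n) (hp0 n).le (hp1 n).le
      (by simpa using hxy) hpos (by linarith) hn (by linarith)
  · filter_upwards [hpos, eventually_sq_div_le hKP hps hK2, eventually_gt_atTop (2 * ℓ + 2),
      eventually_gt_atTop x, eventually_gt_atTop y,
      he.eventually_le_const (by norm_num : (0 : ℝ) < 1 / 4), hc] with n hpos hlam hn hx hy he4 hc
    have hLn := hL n (by omega) hpos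
    rw [div_le_iff₀ hLn, mul_comm]
    have hpsn := psf_nonneg (hKP n)
    refine (gonMeasure_event_le (x := ⟨x, hx⟩) (y := ⟨y, hy⟩) (hKP n) (hp0 n).le (hp1 n).le
      (by simpa using hxy) hpos (by linarith) hn (by linarith)).trans ?_
    have : 0 ≤ Real.exp (Real.exp (n * (p n ^ 2 * ((K n : ℝ) / P n))) *
        ((K n : ℝ) ^ 2 / P n)) - 1 := by
      have := Real.one_le_exp (x := Real.exp (n * (p n ^ 2 * ((K n : ℝ) / P n))) *
        ((K n : ℝ) ^ 2 / P n)) (by positivity)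
      linarith
    gcongr

end asymptotics

/-- joint degree asymptotics for two distinct non-adjacent nodes
in `𝔾_on`. -/
theorem gon_joint_degree_no_edge_asymptotics
    (k : ℕ) (hk : 1 ≤ k) (K P : ℕ → ℕ) (p : ℕ → ℝ)
    (hKP : ∀ n, K n ≤ P n) (hp0 : ∀ n, 0 < p n) (hp1 : ∀ n, p n < 1)
    (hps : Tendsto (fun n : ℕ => psf (K n) (P n)) atTop (nhds 0))
    (hK2 : ∀ᶠ n : ℕ in atTop, 2 ≤ K n)
    (α : ℕ → ℝ)
    (hα : ∀ n : ℕ, 1 ≤ n → pef (K n) (P n) (p n) =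
      (Real.log n + ((k : ℝ) - 1) * Real.log (Real.log n) + α n) / (n : ℝ))
    (hαbot : Tendsto α atTop atBot)
    (x y : ℕ) (hxy : x ≠ y) :
    -- (a)
    ((∃ ε : ℝ, 0 < ε ∧ ∀ᶠ n : ℕ in atTop, ε < (n : ℝ) * pef (K n) (P n) (p n)) →
      ∀ ℓ : ℕ, Tendsto (fun n : ℕ =>
          (gonMeasure n (K n) (P n) (p n)
              (degEvent n (K n) (P n) x ℓ ∩ degEvent n (K n) (P n) y ℓ ∩
                (edgeEvent n (K n) (P n) x y)ᶜ)).toReal /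
            ((1 / (ℓ.factorial : ℝ) ^ 2) * (pef (K n) (P n) (p n) * (n : ℝ)) ^ (2 * ℓ) *
              Real.exp (-2 * (pef (K n) (P n) (p n) * (n : ℝ)))))
        atTop (nhds 1)) ∧
    -- (b)
    Tendsto (fun n : ℕ =>
        (gonMeasure n (K n) (P n) (p n)
            (degEvent n (K n) (P n) x 0 ∩ degEvent n (K n) (P n) y 0 ∩
              (edgeEvent n (K n) (P n) x y)ᶜ)).toReal /
          Real.exp (-2 * (pef (K n) (P n) (p n) * (n : ℝ))))
      atTop (nhds 1) := by
  have hle : ∀ᶠ n : ℕ in atTop, n * pef (K n) (P n) (p n) ≤ 21 / 20 * Real.log n := by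
    filter_upwards [eventually_log_add_le k hαbot, eventually_ge_atTop 1] with n h hn
    have hn0 : (n : ℝ) ≠ 0 := by exact_mod_cast (by omega : n ≠ 0)
    rwa [hα n hn, mul_div_cancel₀ _ hn0]
  constructor
  · rintro ⟨ε, hε, hev⟩ ℓ
    refine tendsto_gonMeasure_event_div hKP hp0 hp1 hps hK2 hle hxy
      (c := (ℓ : ℝ) ^ 2 / (ε / 2)) ?_
    filter_upwards [hev, eventually_ge_atTop 4] with n h hn
    have hn4 : (4 : ℝ) ≤ n := by exact_mod_cast hn
    have he : 0 < pef (K n) (P n) (p n) := by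
      by_contra hneg
      nlinarith
    gcongr
    nlinarith
  · have := tendsto_gonMeasure_event_div hKP hp0 hp1 hps hK2 hle hxy (ℓ := 0) (c := 0) (by simp)
    simpa [jointDegLimit] using this
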